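/- For every θ ∈ (0, π/4) there exists a constant s_θ > 0 with the following property. Let n ≥ 1, let Δ_n be an M^{-2n}-dense subset of the diagonal Δ (the segment from (0,1) to (1,0)), and let A_n^θ be an M^{-2n}-dense subset of the interval (θ, π/2 − θ). Then for every union F of level-(n−1) M-adic squares in [0,1]² and every segment ℓ ∈ 𝔏^θ there exists a segment ℓ' whose intersection point with Δ lies in Δ_n and whose angle with the x-axis lies in A_n^θ, such that 𝓛eb₁(F ∩ ℓ) ≤ 𝓛eb₁(F ∩ ℓ') + s_θ M^{-(n−1)}. -/

import Mathlib

open MeasureTheory Set ENNReal ProbabilityTheory Real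

noncomputable section

/-- The alphabet indexing the `M^d` subcubes of a cube in `[0,1]^d`. -/
abbrev Alpha (d M : ℕ) : Type := Fin d → Fin M

/-- Finite nonempty words over the alphabet; they index `M`-adic cubes. -/
abbrev Word (d M : ℕ) : Type := {w : List (Alpha d M) // w ≠ []}

/-- The sample space: `{0,1}`-labelings of all finite nonempty words. -/
abbrev PercSpace (d M : ℕ) : Type := Word d M → Bool

/-- `P` is the product measure making the labels i.i.d. Bernoulli(`p`). -/
def IsBernoulliPerc (d M : ℕ) (p : ℝ) (P : Measure (PercSpace d M)) : Prop :=
  IsProbabilityMeasure P ∧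
    ∀ (S : Finset (Word d M)) (b : Word d M → Bool),
      P {ω | ∀ w ∈ S, ω w = b w} =
        ∏ w ∈ S, if b w then ENNReal.ofReal p else ENNReal.ofReal (1 - p)

/-- A level-`w.length` cube is retained iff its word and every nonempty prefix
of its word carry label 1. -/
def Retained (d M : ℕ) (ω : PercSpace d M) (w : List (Alpha d M)) : Prop :=
  ∀ (u : List (Alpha d M)) (hu : u ≠ []), u <+: w → ω ⟨u, hu⟩ = true

/-- The `i`-th coordinate of the lower-left corner of the cube indexed by `w`. -/
def wordBase (d M : ℕ) (w : List (Alpha d M)) (i : Fin d) : ℝ :=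
  ∑ j : Fin w.length, ((w.get j) i : ℝ) * (M : ℝ) ^ (-(j : ℤ) - 1)

/-- The closed `M`-adic cube of level `w.length` indexed by the word `w`. -/
def wordCube (d M : ℕ) (w : List (Alpha d M)) : Set (EuclideanSpace ℝ (Fin d)) :=
  {x | ∀ i, wordBase d M w i ≤ x i ∧ x i ≤ wordBase d M w i + (M : ℝ) ^ (-(w.length : ℤ))}

/-- `E_n`, the union of the retained level-`n` cubes. -/
def approx (d M : ℕ) (ω : PercSpace d M) (n : ℕ) : Set (EuclideanSpace ℝ (Fin d)) :=
  ⋃ w ∈ {w : List (Alpha d M) | w.length = n ∧ Retained d M ω w}, wordCube d M w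

/-- The fractal percolation set `E = ⋂_{n ≥ 1} E_n`. -/
def percLimit (d M : ℕ) (ω : PercSpace d M) : Set (EuclideanSpace ℝ (Fin d)) :=
  ⋂ n ∈ {n : ℕ | 1 ≤ n}, approx d M ω n

/-- The segment cut out of `[0,1]²` by the line through `z` with direction `v`. -/
def lineSeg (z v : EuclideanSpace ℝ (Fin 2)) : Set (EuclideanSpace ℝ (Fin 2)) :=
  {x | (∃ t : ℝ, x = z + t • v) ∧ ∀ i, 0 ≤ x i ∧ x i ≤ 1}

/-- The line through `z` with direction `v` meets the open unit square. -/
def MeetsOpenSquare (z v : EuclideanSpace ℝ (Fin 2)) : Prop :=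
  ∃ t : ℝ, ∀ i, 0 < (z + t • v) i ∧ (z + t • v) i < 1

/-- The line with direction `v` makes an acute angle `> θ` with both coordinate
axes (the angle with the `x`-axis has sine `|v 1|/‖v‖`, the one with the
`y`-axis has sine `|v 0|/‖v‖`). -/
def AngleSep (θ : ℝ) (v : EuclideanSpace ℝ (Fin 2)) : Prop :=
  Real.sin θ * ‖v‖ < |v 1| ∧ Real.sin θ * ‖v‖ < |v 0|

/-- The closed level-`n` `M`-adic cube of `[0,1]^d` with lower corner `(k i * M⁻ⁿ)ᵢ`. -/
def adicCube (d M n : ℕ) (k : Fin d → ℕ) : Set (EuclideanSpace ℝ (Fin d)) :=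
  {x | ∀ i, (k i : ℝ) * (M : ℝ) ^ (-(n : ℤ)) ≤ x i ∧
      x i ≤ ((k i : ℝ) + 1) * (M : ℝ) ^ (-(n : ℤ))}

/-- The diagonal `Δ` of the unit square, from `(0,1)` to `(1,0)`. -/
def diagSeg : Set (EuclideanSpace ℝ (Fin 2)) :=
  {x | x 0 + x 1 = 1 ∧ 0 ≤ x 0 ∧ x 0 ≤ 1}

/-- The unit direction vector of angle `α` with the `x`-axis. -/
def dirVec (α : ℝ) : EuclideanSpace ℝ (Fin 2) :=
  (WithLp.equiv 2 (Fin 2 → ℝ)).symm ![Real.cos α, Real.sin α]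

lemma dsa_dir0 (α : ℝ) : dirVec α 0 = Real.cos α := rfl

lemma dsa_dir1 (α : ℝ) : dirVec α 1 = Real.sin α := rfl

lemma dsa_dir_norm (α : ℝ) : ‖dirVec α‖ = 1 := by
  rw [EuclideanSpace.norm_eq, Fin.sum_univ_two, dsa_dir0, dsa_dir1]
  simp

lemma dsa_isom (z : EuclideanSpace ℝ (Fin 2)) (α : ℝ) :
    Isometry (fun t : ℝ => z + t • dirVec α) := by
  refine Isometry.of_dist_eq fun s t => ?_
  rw [dist_add_left, dist_eq_norm, ← sub_smul, norm_smul, dsa_dir_norm, mul_one, Real.dist_eq,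
    Real.norm_eq_abs]

lemma dsa_measure (F : Set (EuclideanSpace ℝ (Fin 2))) (z : EuclideanSpace ℝ (Fin 2)) (α : ℝ) :
    μH[1] (F ∩ lineSeg z (dirVec α)) =
      volume {t : ℝ | z + t • dirVec α ∈ F ∧
        ∀ i, 0 ≤ (z + t • dirVec α) i ∧ (z + t • dirVec α) i ≤ 1} := by
  rw [← hausdorffMeasure_real, ← (dsa_isom z α).hausdorffMeasure_image (Or.inl zero_le_one)]
  congr 1
  ext x
  constructor
  · rintro ⟨hF, ⟨t, rfl⟩, h⟩
    exact ⟨t, ⟨hF, h⟩, rfl⟩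
  · rintro ⟨t, ⟨hF, h⟩, rfl⟩
    exact ⟨hF, ⟨t, rfl⟩, h⟩

lemma dsa_vol (c a σ δ : ℝ) (hσ : 0 < σ) (ha : σ ≤ a) (hδ : 0 ≤ δ) :
    volume {t : ℝ | |c + t * a| ≤ δ} ≤ ENNReal.ofReal (2 * δ / σ) := by
  have ha0 : 0 < a := hσ.trans_le ha
  have hsub : {t : ℝ | |c + t * a| ≤ δ} ⊆ Set.Icc ((-δ - c) / a) ((δ - c) / a) := by
    intro t ht
    have := abs_le.1 (show |c + t * a| ≤ δ from ht)
    constructor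
    · rw [div_le_iff₀ ha0]; linarith
    · rw [le_div_iff₀ ha0]; linarith
  refine (measure_mono hsub).trans ?_
  rw [Real.volume_Icc]
  apply ENNReal.ofReal_le_ofReal
  have : (δ - c) / a - (-δ - c) / a = 2 * δ / a := by ring
  rw [this]
  gcongr

lemma dsa_coord {a b x y δ : ℝ} (h1 : a ≤ x) (h2 : x ≤ b) (h : |x - y| ≤ δ)
    (ha : ¬ |x - a| ≤ δ) (hb : ¬ |x - b| ≤ δ) : a ≤ y ∧ y ≤ b := by
  rw [abs_of_nonneg (by linarith)] at ha
  rw [abs_of_nonpos (by linarith)] at hb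
  have := abs_le.1 h
  constructor <;> linarith

lemma dsa_abs_coord (x y : EuclideanSpace ℝ (Fin 2)) (i : Fin 2) : |x i - y i| ≤ dist x y := by
  rw [dist_eq_norm]
  have := PiLp.norm_apply_le (x - y) i
  simpa using this

/-- for every `θ ∈ (0, π/4)` there is `s_θ > 0` such that for every
`n ≥ 1`, every `M^{-2n}`-dense subset `Δₙ` of the diagonal `Δ`, every
`M^{-2n}`-dense subset `Aₙ` of `(θ, π/2-θ)`, every union `F` of level-`(n-1)`
squares and every `ℓ ∈ 𝔏^θ` there is `ℓ'` with intersection point in `Δₙ` and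
angle in `Aₙ` such that `|F ∩ ℓ| ≤ |F ∩ ℓ'| + s_θ M^{-(n-1)}`. -/
theorem discretized_slice_approximation (M : ℕ) (hM : 2 ≤ M) :
    ∀ θ ∈ Set.Ioo 0 (π / 4), ∃ s : ℝ, 0 < s ∧
      ∀ n : ℕ, 1 ≤ n →
      ∀ Δn : Set (EuclideanSpace ℝ (Fin 2)), Δn ⊆ diagSeg →
        (∀ x ∈ diagSeg, ∃ y ∈ Δn, dist x y ≤ (M : ℝ) ^ (-(2 * n : ℤ))) →
      ∀ An : Set ℝ, An ⊆ Set.Ioo θ (π / 2 - θ) →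
        (∀ α ∈ Set.Ioo θ (π / 2 - θ), ∃ β ∈ An, |α - β| ≤ (M : ℝ) ^ (-(2 * n : ℤ))) →
      ∀ 𝒞 : Set (Fin 2 → ℕ), (∀ k ∈ 𝒞, ∀ i, k i < M ^ (n - 1)) →
      ∀ z ∈ diagSeg, 0 < z 0 → z 0 < 1 → ∀ α ∈ Set.Ioo θ (π / 2 - θ),
        ∃ z' ∈ Δn, ∃ α' ∈ An,
          μH[1] ((⋃ k ∈ 𝒞, adicCube 2 M (n - 1) k) ∩ lineSeg z (dirVec α)) ≤
            μH[1] ((⋃ k ∈ 𝒞, adicCube 2 M (n - 1) k) ∩ lineSeg z' (dirVec α')) +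
              ENNReal.ofReal (s * (M : ℝ) ^ (1 - (n : ℤ))) := by
  intro θ hθ
  obtain ⟨hθ0, hθ1⟩ := hθ
  have hpi := Real.pi_pos
  have hσ : 0 < Real.sin θ := Real.sin_pos_of_pos_of_lt_pi hθ0 (by linarith)
  refine ⟨24 / Real.sin θ, by positivity, ?_⟩
  intro n hn Δn hΔ hΔd An hA hAd 𝒞 h𝒞 z hz hz0 hz1 α hα
  obtain ⟨z', hz', hzz⟩ := hΔd z hz
  obtain ⟨α', hα', hαα⟩ := hAd α hα
  refine ⟨z', hz', α', hα', ?_⟩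
  obtain ⟨m, rfl⟩ : ∃ m, n = m + 1 := ⟨n - 1, by omega⟩
  rw [dsa_measure, dsa_measure]
  simp only [Nat.add_sub_cancel] at h𝒞 ⊢
  have hM1 : (1 : ℝ) ≤ M := by exact_mod_cast (by omega : 1 ≤ M)
  have hM0 : (M : ℝ) ≠ 0 := by positivity
  set σ := Real.sin θ with hσdef
  have he : (M : ℝ) ^ (1 - ((m + 1 : ℕ) : ℤ)) = (M : ℝ) ^ (-(m : ℤ)) := by
    congr 1; push_cast; ring
  rw [he]
  have hNε : (M : ℝ) ^ m * (M : ℝ) ^ (-(m : ℤ)) = 1 := by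
    rw [zpow_neg, zpow_natCast]; exact mul_inv_cancel₀ (by positivity)
  have hηε : (M : ℝ) ^ (-(2 * (m + 1 : ℕ) : ℤ)) ≤
      (M : ℝ) ^ (-(m : ℤ)) * (M : ℝ) ^ (-(m : ℤ)) := by
    rw [← zpow_add₀ hM0]
    exact zpow_le_zpow_right₀ hM1 (by push_cast; omega)
  have hN1 : (1 : ℝ) ≤ (M : ℝ) ^ m := one_le_pow₀ hM1
  have hη0 : 0 < (M : ℝ) ^ (-(2 * (m + 1 : ℕ) : ℤ)) := by positivity
  have hε0 : 0 < (M : ℝ) ^ (-(m : ℤ)) := by positivity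
  unfold adicCube
  generalize (M : ℝ) ^ (-(2 * (m + 1 : ℕ) : ℤ)) = η at *
  generalize (M : ℝ) ^ (-(m : ℤ)) = ε at *
  -- direction bounds
  have hsin : σ ≤ Real.sin α :=
    Real.sin_le_sin_of_le_of_le_pi_div_two (by linarith) (by linarith [hα.2]) hα.1.le
  have hcos : σ ≤ Real.cos α := by
    rw [← Real.sin_pi_div_two_sub]
    exact Real.sin_le_sin_of_le_of_le_pi_div_two (by linarith) (by linarith [hα.1])
      (by linarith [hα.2])
  have hv : ∀ i, σ ≤ dirVec α i := by
    intro i; fin_cases i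
    · exact hcos
    · exact hsin
  have hvv : ∀ i, |dirVec α i - dirVec α' i| ≤ η := by
    intro i
    refine le_trans ?_ hαα
    fin_cases i
    · exact Real.abs_cos_sub_cos_le α α'
    · exact Real.abs_sin_sub_sin_le α α'
  have hzi : ∀ i, 0 ≤ z i ∧ z i ≤ 1 := by
    have h1 := hz.1
    intro i; fin_cases i
    · exact ⟨hz0.le, hz1.le⟩
    · constructor <;> simp <;> linarith
  have hzz' : ∀ i, |z i - z' i| ≤ η := fun i => (dsa_abs_coord z z' i).trans hzz
  set B : Set ℝ := ⋃ i ∈ (Finset.univ : Finset (Fin 2)), ⋃ j ∈ Finset.range (M ^ m + 1),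
    {t : ℝ | |(z i - (j : ℝ) * ε) + t * dirVec α i| ≤ 3 * η} with hB
  have hBvol : volume B ≤ ENNReal.ofReal (24 / σ * ε) := by
    calc volume B ≤ ∑ i ∈ (Finset.univ : Finset (Fin 2)), ∑ j ∈ Finset.range (M ^ m + 1),
          ENNReal.ofReal (2 * (3 * η) / σ) := by
          refine (measure_biUnion_finset_le _ _).trans (Finset.sum_le_sum fun i _ => ?_)
          refine (measure_biUnion_finset_le _ _).trans (Finset.sum_le_sum fun j _ => ?_)
          exact dsa_vol _ _ _ _ hσ (hv i) (by positivity)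
      _ = ENNReal.ofReal (2 * (((M : ℝ) ^ m + 1) * (2 * (3 * η) / σ))) := by
          rw [ENNReal.ofReal_mul (by norm_num), ENNReal.ofReal_mul (by positivity)]
          have : ((M : ℝ) ^ m + 1) = ((M ^ m + 1 : ℕ) : ℝ) := by push_cast; rfl
          rw [this, ENNReal.ofReal_natCast]
          simp
      _ ≤ _ := by
          apply ENNReal.ofReal_le_ofReal
          have h1 : 2 * (((M : ℝ) ^ m + 1) * (2 * (3 * η) / σ)) =
            12 * (((M : ℝ) ^ m + 1) * η) / σ := by ring
          have h2 : 24 / σ * ε = 24 * ε / σ := by ring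
          rw [h1, h2]
          apply div_le_div_of_nonneg_right _ hσ.le
          have h3 : ((M : ℝ) ^ m + 1) * η ≤ (2 * (M : ℝ) ^ m) * (ε * ε) := by
            apply mul_le_mul _ hηε hη0.le (by positivity)
            linarith
          have h4 : (2 * (M : ℝ) ^ m) * (ε * ε) = 2 * ε := by
            linear_combination (2 * ε) * hNε
          linarith
  refine le_trans (measure_mono ?_) ((measure_union_le _ B).trans (add_le_add le_rfl hBvol))
  rintro t ⟨htF, htS⟩
  by_cases htB : t ∈ B
  · exact Or.inr htB
  left
  simp only [hB, Set.mem_iUnion, Set.mem_ofPred_eq, not_exists, Finset.mem_univ,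
    Finset.mem_range, true_implies, forall_true_left] at htB
  simp only [PiLp.add_apply, PiLp.smul_apply, smul_eq_mul] at htS
  have ht2 : |t| ≤ 2 := by
    have h0 := htS 0
    have h1 := htS 1
    have k0 := hzi 0
    have k1 := hzi 1
    rw [dsa_dir0] at h0
    rw [dsa_dir1] at h1
    have hsc := Real.sin_sq_add_cos_sq α
    have e0 : (t * Real.cos α) ^ 2 ≤ 1 := by
      rw [sq_le_one_iff_abs_le_one, abs_le]; constructor <;> linarith
    have e1 : (t * Real.sin α) ^ 2 ≤ 1 := by
      rw [sq_le_one_iff_abs_le_one, abs_le]; constructor <;> linarith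
    have e2 : t ^ 2 = (t * Real.cos α) ^ 2 + (t * Real.sin α) ^ 2 := by
      linear_combination (-t ^ 2) * hsc
    exact abs_le_of_sq_le_sq (by linarith) (by norm_num)
  have hclose : ∀ i, |(z i + t * dirVec α i) - (z' i + t * dirVec α' i)| ≤ 3 * η := by
    intro i
    have e : (z i + t * dirVec α i) - (z' i + t * dirVec α' i) =
      (z i - z' i) + t * (dirVec α i - dirVec α' i) := by ring
    rw [e]
    refine (abs_add_le _ _).trans ?_
    rw [abs_mul]
    have := mul_le_mul ht2 (hvv i) (abs_nonneg _) (by norm_num)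
    linarith [hzz' i]
  simp only [Set.mem_iUnion, Set.mem_ofPred_eq, PiLp.add_apply, PiLp.smul_apply, smul_eq_mul,
    exists_prop] at htF ⊢
  obtain ⟨k, hk, hkt⟩ := htF
  have key : ∀ i, (k i : ℝ) * ε ≤ z' i + t * dirVec α' i ∧
      z' i + t * dirVec α' i ≤ ((k i : ℝ) + 1) * ε := by
    intro i
    have hki := h𝒞 k hk i
    have b1 := htB i (k i) (by omega)
    have b2 := htB i (k i + 1) (by omega)
    refine dsa_coord (hkt i).1 (hkt i).2 (hclose i) ?_ ?_
    · intro h; apply b1; convert h using 2; ring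
    · intro h; apply b2; convert h using 2; push_cast; ring
  refine ⟨⟨k, hk, key⟩, fun i => ⟨le_trans (by positivity) (key i).1, (key i).2.trans ?_⟩⟩
  have hki : ((k i : ℝ) + 1) ≤ (M : ℝ) ^ m := by exact_mod_cast h𝒞 k hk i
  exact (mul_le_mul_of_nonneg_right hki hε0.le).trans hNε.le
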